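/- Suppose H : ℝᵐ → ℝ is differentiable, μ-strongly convex, and has L-Lipschitz gradient; B is differentiable with component Lipschitz constants L̄_i, r := ΣL̄_i²; (A2) holds with τ > 0 and (A3) holds with ξ ≥ 0. Let y ∈ X and let x⁺ be a minimizer over X of x ↦ H(B(y)) + ∇(H∘B)(y)ᵀ(x − y) + (rL/2)‖x − y‖² + R(x). Then for every x ∈ X: H(B(x⁺)) ≤ H(B(x)) + ∇(H∘B)(y)ᵀ(x⁺ − x) + ((rL + ξ)/2)‖x⁺ − y‖² − ((τμ − ξ)/2)‖x − y‖². -/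

import Mathlib

open scoped RealInnerProductSpace

/-!
Linearize in two stages at `y`. The outer function `H` lies between quadratics at `B y` of
curvatures `μ` and `L`, and `‖B w - B y‖²` lies between `τ ‖w - y‖²` and `r ‖w - y‖²`. Replacing
`B w - B y` by `B'(y) (w - y)` in the linear term costs at most `ξ / 2 * ‖w - y‖²`: at time `t` on
the segment from `y` to `w` the derivative of this error is at most `ξ t ‖w - y‖²`. Hence `H ∘ B`
lies between its quadratic models at `y` of curvatures `τ μ - ξ` and `r L + ξ`, and the claim is the
upper model at `x⁺` minus the lower model at `x`.
-/

section SegmentRemainder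

theorem le_add_deriv_zero_add_of_deriv_le {f f' : ℝ → ℝ} {c : ℝ}
    (hf : ∀ t ∈ Set.Icc (0 : ℝ) 1, HasDerivAt f (f' t) t)
    (hf' : ∀ t ∈ Set.Ioo (0 : ℝ) 1, f' t ≤ f' 0 + c * t) :
    f 1 ≤ f 0 + f' 0 + c / 2 := by
  have hq (t : ℝ) : HasDerivAt (fun t ↦ f 0 + f' 0 * t + c / 2 * t ^ 2) (f' 0 + c * t) t := by
    refine ((((hasDerivAt_id t).const_mul _).const_add (f 0)).add
      (((hasDerivAt_id t).pow 2).const_mul _)).congr_deriv ?_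
    simp only [id, mul_one, Nat.cast_ofNat]
    ring
  have hslope : ∀ t ∈ Set.Ico (0 : ℝ) 1, f' t ≤ f' 0 + c * t := by
    intro t ht
    obtain rfl | htpos := ht.1.eq_or_lt
    · simp
    · exact hf' t ⟨htpos, ht.2⟩
  have hle := image_le_of_deriv_right_le_deriv_boundary
    (fun t ht ↦ (hf t ht).continuousAt.continuousWithinAt)
    (fun t ht ↦ (hf t (Set.Ico_subset_Icc_self ht)).hasDerivWithinAt) (by simp)
    (fun t _ ↦ (hq t).continuousAt.continuousWithinAt) (fun t _ ↦ (hq t).hasDerivWithinAt)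
    hslope (Set.right_mem_Icc.2 zero_le_one)
  simpa using hle

variable {E : Type*} [NormedAddCommGroup E] [NormedSpace ℝ E] {s : Set E} {x y : E} {K : ℝ}

theorem le_add_fderiv_add_sq_of_starConvex {f : E → ℝ} {f' : E → E →L[ℝ] ℝ}
    (hs : StarConvex ℝ y s) (hf : ∀ w ∈ s, HasFDerivAt f (f' w) w)
    (hK : ∀ w ∈ s, (f' w - f' y) (w - y) ≤ K * ‖w - y‖ ^ 2) (hx : x ∈ s) :
    f x ≤ f y + f' y (x - y) + K / 2 * ‖x - y‖ ^ 2 := by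
  set γ : ℝ → E := ⇑(AffineMap.lineMap (k := ℝ) y x)
  have hγs {t : ℝ} (ht : t ∈ Set.Icc (0 : ℝ) 1) : γ t ∈ s :=
    hs.segment_subset hx (lineMap_mem_segment ℝ y x ht)
  have hfγ : ∀ t ∈ Set.Icc (0 : ℝ) 1, HasDerivAt (f ∘ γ) (f' (γ t) (x - y)) t := fun t ht ↦
    (hf _ (hγs ht)).comp_hasDerivAt t AffineMap.hasDerivAt_lineMap
  have hγ₀ : γ 0 = y := AffineMap.lineMap_apply_zero y x
  have hslope : ∀ t ∈ Set.Ioo (0 : ℝ) 1,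
      f' (γ t) (x - y) ≤ f' (γ 0) (x - y) + K * ‖x - y‖ ^ 2 * t := by
    intro t ht
    have hγy : γ t - y = t • (x - y) := by simp [γ, AffineMap.lineMap_apply]
    have hKt := hK _ (hγs (Set.Ioo_subset_Icc_self ht))
    rw [hγy, map_smul, smul_eq_mul, norm_smul, mul_pow, Real.norm_eq_abs, sq_abs,
      sub_apply] at hKt
    rw [hγ₀, ← sub_le_iff_le_add']
    exact le_of_mul_le_mul_left (hKt.trans_eq (by ring)) ht.1
  have hle := le_add_deriv_zero_add_of_deriv_le hfγ hslope
  simpa [γ, mul_div_right_comm] using hle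

variable {F : Type*} [NormedAddCommGroup F] [InnerProductSpace ℝ F]
  {B : E → F} {B' : E → E →L[ℝ] F} {g : F}

theorem abs_inner_sub_sub_fderiv_le_of_starConvex (hs : StarConvex ℝ y s)
    (hB : ∀ w ∈ s, HasFDerivAt B (B' w) w)
    (hK : ∀ w ∈ s, |⟪g, (B' w - B' y) (w - y)⟫| ≤ K * ‖w - y‖ ^ 2) (hx : x ∈ s) :
    |⟪g, B x - B y - B' y (x - y)⟫| ≤ K / 2 * ‖x - y‖ ^ 2 := by
  have hmodel (h : F) (hKh : ∀ w ∈ s, ⟪h, (B' w - B' y) (w - y)⟫ ≤ K * ‖w - y‖ ^ 2) :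
      ⟪h, B x⟫ ≤ ⟪h, B y⟫ + ⟪h, B' y (x - y)⟫ + K / 2 * ‖x - y‖ ^ 2 :=
    le_add_fderiv_add_sq_of_starConvex (f' := fun w ↦ (innerSL ℝ h).comp (B' w)) hs
      (fun w hw ↦ (innerSL ℝ h).hasFDerivAt.comp w (hB w hw))
      (fun w hw ↦ by simpa [inner_sub_right] using hKh w hw) hx
  have hupper := hmodel g fun w hw ↦ (le_abs_self _).trans (hK w hw)
  have hlower := hmodel (-g) fun w hw ↦
    (inner_neg_left g _).trans_le ((neg_le_abs _).trans (hK w hw))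
  simp only [inner_neg_left] at hlower
  rw [inner_sub_right, inner_sub_right, abs_le]
  constructor <;> linarith

end SegmentRemainder

section QuadraticModels

variable {F : Type*} [NormedAddCommGroup F] [InnerProductSpace ℝ F] [CompleteSpace F]
  {H : F → ℝ} {L : ℝ}

theorem le_add_inner_gradient_add_sq {u : F} (hH : Differentiable ℝ H)
    (hL : ∀ v, ‖gradient H v - gradient H u‖ ≤ L * ‖v - u‖) (v : F) :
    H v ≤ H u + ⟪gradient H u, v - u⟫ + L / 2 * ‖v - u‖ ^ 2 := by
  rw [inner_gradient_left]
  refine le_add_fderiv_add_sq_of_starConvex (starConvex_univ u)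
    (fun w _ ↦ (hH w).hasFDerivAt) (fun w _ ↦ ?_) (Set.mem_univ v)
  calc (fderiv ℝ H w - fderiv ℝ H u) (w - u)
      = ⟪gradient H w - gradient H u, w - u⟫ := by simp [inner_sub_left, inner_gradient_left]
    _ ≤ ‖gradient H w - gradient H u‖ * ‖w - u‖ := real_inner_le_norm _ _
    _ ≤ L * ‖w - u‖ * ‖w - u‖ := by gcongr; exact hL w
    _ = L * ‖w - u‖ ^ 2 := by ring

variable {E : Type*} [NormedAddCommGroup E] [InnerProductSpace ℝ E] [CompleteSpace E]
  {B : E → F} {s : Set E} {x y : E} {ξ : ℝ}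

theorem inner_gradient_comp (hH : DifferentiableAt ℝ H (B y)) (hB : DifferentiableAt ℝ B y)
    (v : E) :
    ⟪gradient (fun w ↦ H (B w)) y, v⟫ = ⟪gradient H (B y), fderiv ℝ B y v⟫ := by
  rw [inner_gradient_left, inner_gradient_left, fderiv_fun_comp y hH hB,
    ContinuousLinearMap.comp_apply]

theorem abs_inner_gradient_sub_inner_gradient_comp_le (hs : StarConvex ℝ y s)
    (hH : DifferentiableAt ℝ H (B y)) (hB : ∀ w ∈ s, DifferentiableAt ℝ B w)
    (hξ : ∀ w ∈ s, |⟪gradient H (B y), (fderiv ℝ B w - fderiv ℝ B y) (w - y)⟫| ≤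
      ξ * ‖w - y‖ ^ 2) (hx : x ∈ s) :
    |⟪gradient H (B y), B x - B y⟫ - ⟪gradient (fun w ↦ H (B w)) y, x - y⟫| ≤
      ξ / 2 * ‖x - y‖ ^ 2 := by
  rw [inner_gradient_comp hH (hB y (hs.mem ⟨x, hx⟩)), ← inner_sub_right]
  exact abs_inner_sub_sub_fderiv_le_of_starConvex hs (fun w hw ↦ (hB w hw).hasFDerivAt) hξ hx

theorem comp_le_add_inner_gradient_add_sq {r : ℝ} (hs : StarConvex ℝ y s) (hL : 0 ≤ L)
    (hH : Differentiable ℝ H) (hHL : ∀ v, ‖gradient H v - gradient H (B y)‖ ≤ L * ‖v - B y‖)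
    (hB : ∀ w ∈ s, DifferentiableAt ℝ B w) (hr : ‖B x - B y‖ ^ 2 ≤ r * ‖x - y‖ ^ 2)
    (hξ : ∀ w ∈ s, |⟪gradient H (B y), (fderiv ℝ B w - fderiv ℝ B y) (w - y)⟫| ≤
      ξ * ‖w - y‖ ^ 2) (hx : x ∈ s) :
    H (B x) ≤ H (B y) + ⟪gradient (fun w ↦ H (B w)) y, x - y⟫ +
      (r * L + ξ) / 2 * ‖x - y‖ ^ 2 := by
  have hlinear := abs_le.1 (abs_inner_gradient_sub_inner_gradient_comp_le hs (hH _) hB hξ hx)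
  have hquadratic : L / 2 * ‖B x - B y‖ ^ 2 ≤ L / 2 * (r * ‖x - y‖ ^ 2) := by gcongr
  linarith [le_add_inner_gradient_add_sq hH hHL (B x)]

theorem add_inner_gradient_add_sq_le_comp {μ τ : ℝ} (hs : StarConvex ℝ y s) (hμ : 0 ≤ μ)
    (hH : DifferentiableAt ℝ H (B y))
    (hHμ : H (B y) + ⟪gradient H (B y), B x - B y⟫ + μ / 2 * ‖B x - B y‖ ^ 2 ≤ H (B x))
    (hB : ∀ w ∈ s, DifferentiableAt ℝ B w) (hτ : τ * ‖x - y‖ ^ 2 ≤ ‖B x - B y‖ ^ 2)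
    (hξ : ∀ w ∈ s, |⟪gradient H (B y), (fderiv ℝ B w - fderiv ℝ B y) (w - y)⟫| ≤
      ξ * ‖w - y‖ ^ 2) (hx : x ∈ s) :
    H (B y) + ⟪gradient (fun w ↦ H (B w)) y, x - y⟫ + (τ * μ - ξ) / 2 * ‖x - y‖ ^ 2 ≤
      H (B x) := by
  have hlinear := abs_le.1 (abs_inner_gradient_sub_inner_gradient_comp_le hs hH hB hξ hx)
  have hquadratic : μ / 2 * (τ * ‖x - y‖ ^ 2) ≤ μ / 2 * ‖B x - B y‖ ^ 2 := by gcongr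
  linarith

end QuadraticModels

theorem norm_sq_le_sum_sq_mul_sq_of_L2 {ι : Type*} [Fintype ι] {β : ι → Type*}
    [∀ i, SeminormedAddCommGroup (β i)] {w : PiLp 2 β} {c : ι → ℝ} {a : ℝ}
    (h : ∀ i, ‖w i‖ ≤ c i * a) : ‖w‖ ^ 2 ≤ (∑ i, c i ^ 2) * a ^ 2 := by
  rw [PiLp.norm_sq_eq_of_L2, Finset.sum_mul]
  gcongr with i
  rw [← mul_pow]
  gcongr
  exact h i

theorem cfista_subproblem_smooth_bound_general
    {E F : Type*} [NormedAddCommGroup E] [InnerProductSpace ℝ E] [CompleteSpace E]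
    [NormedAddCommGroup F] [InnerProductSpace ℝ F] [CompleteSpace F]
    {X : Set E} {y : E} (hX : StarConvex ℝ y X)
    {H : F → ℝ} (hH : Differentiable ℝ H) {μ L : ℝ} (hμ : 0 ≤ μ) (hL : 0 ≤ L)
    (hHμ : ∀ u v, H u + ⟪gradient H u, v - u⟫ + μ / 2 * ‖v - u‖ ^ 2 ≤ H v)
    (hHL : ∀ u v, ‖gradient H u - gradient H v‖ ≤ L * ‖u - v‖)
    {B : E → F} (hB : ∀ w ∈ X, DifferentiableAt ℝ B w) {r τ ξ : ℝ}
    (hr : ∀ w ∈ X, ‖B w - B y‖ ^ 2 ≤ r * ‖w - y‖ ^ 2)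
    (hτ : ∀ w ∈ X, τ * ‖w - y‖ ^ 2 ≤ ‖B w - B y‖ ^ 2)
    (hξ : ∀ w ∈ X, |⟪gradient H (B y), (fderiv ℝ B w - fderiv ℝ B y) (w - y)⟫| ≤
      ξ * ‖w - y‖ ^ 2)
    {z : E} (hz : z ∈ X) {x : E} (hx : x ∈ X) :
    H (B z) ≤ H (B x) + ⟪gradient (fun v ↦ H (B v)) y, z - x⟫
      + (r * L + ξ) / 2 * ‖z - y‖ ^ 2 - (τ * μ - ξ) / 2 * ‖x - y‖ ^ 2 := by
  have hupper := comp_le_add_inner_gradient_add_sq hX hL hH (hHL · _) hB (hr z hz) hξ hz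
  have hlower := add_inner_gradient_add_sq_le_comp hX hμ (hH _) (hHμ _ _) hB (hτ x hx) hξ hx
  rw [← sub_sub_sub_cancel_right z x y, inner_sub_right]
  linarith

/-- Inequality (2.7) in the proof of Theorem 2.1: if `x⁺` minimizes the C-FISTA
proximal subproblem at `y ∈ X`, then for every `x ∈ X`,
`H(B(x⁺)) ≤ H(B(x)) + ∇(H∘B)(y)ᵀ(x⁺ - x) + ((rL + ξ)/2)‖x⁺ - y‖² - ((τμ - ξ)/2)‖x - y‖²`. -/
theorem cfista_subproblem_smooth_bound
    {n m : ℕ}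
    (X : Set (EuclideanSpace ℝ (Fin n)))
    (hXclosed : IsClosed X) (hXconvex : Convex ℝ X)
    (H : EuclideanSpace ℝ (Fin m) → ℝ)
    (hHdiff : Differentiable ℝ H)
    (μ L : ℝ) (hμ : 0 < μ) (hL : 0 < L)
    (hHsc : ∀ u v, H v ≥ H u + ⟪gradient H u, v - u⟫ + μ / 2 * ‖v - u‖ ^ 2)
    (hHlip : ∀ u v, ‖gradient H u - gradient H v‖ ≤ L * ‖u - v‖)
    (B : EuclideanSpace ℝ (Fin n) → EuclideanSpace ℝ (Fin m))
    (hB : Differentiable ℝ B)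
    (Lbar : Fin m → ℝ) (hLbar : ∀ i, 0 ≤ Lbar i)
    (hA1lip : ∀ i, ∀ x y, |B x i - B y i| ≤ Lbar i * ‖x - y‖)
    (r : ℝ) (hr : r = ∑ i, Lbar i ^ 2)
    (τ : ℝ) (hτ : 0 < τ)
    (hA2 : ∀ x ∈ Submodule.span ℝ X, ∀ y ∈ Submodule.span ℝ X,
      τ * ‖x - y‖ ^ 2 ≤ ‖B x - B y‖ ^ 2)
    (ξ : ℝ) (hξ : 0 ≤ ξ)
    (hA3 : ∀ x' ∈ Submodule.span ℝ X, ∀ x'' ∈ Submodule.span ℝ X,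
      |⟪gradient H (B x'), (fderiv ℝ B x'' - fderiv ℝ B x') (x'' - x')⟫|
        ≤ ξ * ‖x'' - x'‖ ^ 2)
    (R : EuclideanSpace ℝ (Fin n) → ℝ) (hR : ConvexOn ℝ Set.univ R)
    (R : EuclideanSpace ℝ (Fin n) → ℝ) (hR : ConvexOn ℝ Set.univ R)
    (y : EuclideanSpace ℝ (Fin n)) (hy : y ∈ X)
    (xplus : EuclideanSpace ℝ (Fin n)) (hxplusX : xplus ∈ X)
    (hxplus : ∀ w ∈ X,
      H (B y) + ⟪gradient (fun v => H (B v)) y, xplus - y⟫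
          + r * L / 2 * ‖xplus - y‖ ^ 2 + R xplus
        ≤ H (B y) + ⟪gradient (fun v => H (B v)) y, w - y⟫
          + r * L / 2 * ‖w - y‖ ^ 2 + R w) :
    ∀ x ∈ X,
      H (B xplus) ≤ H (B x) + ⟪gradient (fun v => H (B v)) y, xplus - x⟫
        + (r * L + ξ) / 2 * ‖xplus - y‖ ^ 2 - (τ * μ - ξ) / 2 * ‖x - y‖ ^ 2 := by
  intro x hx
  have hspan : X ⊆ Submodule.span ℝ X := Submodule.subset_span
  exact cfista_subproblem_smooth_bound_general (hXconvex.starConvex hy) hHdiff hμ.le hL.le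
    hHsc hHlip (fun w _ ↦ hB w)
    (fun w _ ↦ hr ▸ norm_sq_le_sum_sq_mul_sq_of_L2 fun i ↦ hA1lip i w y)
    (fun w hw ↦ hA2 w (hspan hw) y (hspan hy)) (fun w hw ↦ hA3 y (hspan hy) w (hspan hw))
    hxplusX hx
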